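/- arXiv:2110.06670 — 3 statements merged into one kernel-verified Lean document; each statement's English description precedes it below -/
import Mathlib

section
/- Let Ω ⊆ ℝ³ be a connected open set and let f, g : Ω → ℝ³ be smooth maps with J_F > 0 and J_G > 0 on Ω. If Pf = Pg on Ω, then there exists a constant c > 0 such that J_F = c·J_G on Ω. -/
noncomputable section

open Complex

/-- The underlying space of the first Heisenberg group: ℝ³ with coordinates (x, y, t). -/
abbrev Heis : Type := ℝ × ℝ × ℝ

/-- The left-invariant vector field X = ∂/∂x + 2y ∂/∂t, as a derivation. -/
def XD {E : Type*} [NormedAddCommGroup E] [NormedSpace ℝ E] (u : Heis → E) (p : Heis) : E :=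
  fderiv ℝ u p (1, 0, 2 * p.2.1)

/-- The left-invariant vector field Y = ∂/∂y − 2x ∂/∂t, as a derivation. -/
def YD {E : Type*} [NormedAddCommGroup E] [NormedSpace ℝ E] (u : Heis → E) (p : Heis) : E :=
  fderiv ℝ u p (0, 1, -(2 * p.1))

/-- The vector field T = ∂/∂t, as a derivation. -/
def TD {E : Type*} [NormedAddCommGroup E] [NormedSpace ℝ E] (u : Heis → E) (p : Heis) : E :=
  fderiv ℝ u p (0, 0, 1)

/-- Z = (X − iY)/2. -/
def ZD (u : Heis → ℂ) (p : Heis) : ℂ := (XD u p - Complex.I * YD u p) / 2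

/-- Z̄ = (X + iY)/2. -/
def ZbD (u : Heis → ℂ) (p : Heis) : ℂ := (XD u p + Complex.I * YD u p) / 2

/-- The complexification F = f₁ + i f₂ of the horizontal components. -/
def CF (f1 f2 : Heis → ℝ) : Heis → ℂ := fun p => (f1 p : ℂ) + (f2 p : ℂ) * Complex.I

/-- Complexification of a real-valued function. -/
def Cplx (u : Heis → ℝ) : Heis → ℂ := fun p => (u p : ℂ)

/-- The horizontal Jacobian J_F = Xf₁·Yf₂ − Yf₁·Xf₂. -/
def JF (f1 f2 : Heis → ℝ) (p : Heis) : ℝ := XD f1 p * YD f2 p - YD f1 p * XD f2 p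

/-- The contact equations on Ω. -/
def ContactOn (f1 f2 f3 : Heis → ℝ) (Ω : Set Heis) : Prop :=
  ∀ p ∈ Ω, XD f3 p - 2 * f2 p * XD f1 p + 2 * f1 p * XD f2 p = 0 ∧
           YD f3 p - 2 * f2 p * YD f1 p + 2 * f1 p * YD f2 p = 0

/-- f = (f₁,f₂,f₃) is conformal on Ω: smooth, contact, J_F > 0, and the conformality
equations hold. -/
def ConformalOn (f1 f2 f3 : Heis → ℝ) (Ω : Set Heis) : Prop :=
  ContDiffOn ℝ (⊤ : ℕ∞) f1 Ω ∧ ContDiffOn ℝ (⊤ : ℕ∞) f2 Ω ∧ ContDiffOn ℝ (⊤ : ℕ∞) f3 Ω ∧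
  ContactOn f1 f2 f3 Ω ∧ (∀ p ∈ Ω, 0 < JF f1 f2 p) ∧
  ∀ p ∈ Ω, (XD f1 p) ^ 2 + (XD f2 p) ^ 2 = (YD f1 p) ^ 2 + (YD f2 p) ^ 2 ∧
           XD f1 p * YD f1 p + XD f2 p * YD f2 p = 0

/-- The sub-Laplacian Δ_H = X² + Y². -/
def LapH {E : Type*} [NormedAddCommGroup E] [NormedSpace ℝ E] (u : Heis → E) (p : Heis) : E :=
  XD (XD u) p + YD (YD u) p

/-- The CR Schwarzian derivative S_CR(f) = (1/2)·J_F·Z²(J_F⁻¹). -/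
def SCR (f1 f2 : Heis → ℝ) (p : Heis) : ℂ :=
  (1 / 2 : ℂ) * (JF f1 f2 p : ℂ) * ZD (ZD (fun q => (((JF f1 f2 q)⁻¹ : ℝ) : ℂ))) p

/-- The classical type Schwarzian S_CL(f) = Z³F/ZF − (3/2)(Z²F/ZF)². -/
def SCL (f1 f2 : Heis → ℝ) (p : Heis) : ℂ :=
  ZD (ZD (ZD (CF f1 f2))) p / ZD (CF f1 f2) p
    - (3 / 2 : ℂ) * (ZD (ZD (CF f1 f2)) p / ZD (CF f1 f2) p) ^ 2

/-- The Preschwarzian Pf = Z(ln J_F). -/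
def PS (f1 f2 : Heis → ℝ) (p : Heis) : ℂ := ZD (Cplx (fun q => Real.log (JF f1 f2 q))) p

/-- The map (f₁,f₂,f₃) packaged as a map Heis → Heis. -/
def Fmap (f1 f2 f3 : Heis → ℝ) (p : Heis) : Heis := (f1 p, f2 p, f3 p)

theorem JF_contDiffOn {Ω : Set Heis} (hΩ : IsOpen Ω) {f1 f2 : Heis → ℝ}
    (hf1 : ContDiffOn ℝ (⊤ : ℕ∞) f1 Ω) (hf2 : ContDiffOn ℝ (⊤ : ℕ∞) f2 Ω) :
    ContDiffOn ℝ 2 (JF f1 f2) Ω := by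
  have d1 : ContDiffOn ℝ 2 (fderiv ℝ f1) Ω :=
    hf1.fderiv_of_isOpen hΩ (by norm_cast)
  have d2 : ContDiffOn ℝ 2 (fderiv ℝ f2) Ω :=
    hf2.fderiv_of_isOpen hΩ (by norm_cast)
  have hX : ContDiffOn ℝ 2 (fun p : Heis => ((1, 0, 2 * p.2.1) : Heis)) Ω := by fun_prop
  have hY : ContDiffOn ℝ 2 (fun p : Heis => ((0, 1, -(2 * p.1)) : Heis)) Ω := by fun_prop
  exact ((d1.clm_apply hX).mul (d2.clm_apply hY)).sub ((d1.clm_apply hY).mul (d2.clm_apply hX))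

/-- For real-valued `u`, the operator `Z` has real part `X u / 2` and imaginary part `-Y u / 2`. -/
theorem ZD_Cplx {u : Heis → ℝ} {p : Heis} (hu : DifferentiableAt ℝ u p) :
    ZD (Cplx u) p = (((XD u p : ℝ) : ℂ) - Complex.I * ((YD u p : ℝ) : ℂ)) / 2 := by
  have h : HasFDerivAt (Cplx u) (Complex.ofRealCLM.comp (fderiv ℝ u p)) p :=
    Complex.ofRealCLM.hasFDerivAt.comp p hu.hasFDerivAt
  simp [ZD, XD, YD, h.fderiv]

theorem ZD_Cplx_eq_iff {u v : Heis → ℝ} {p : Heis} (hu : DifferentiableAt ℝ u p)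
    (hv : DifferentiableAt ℝ v p) :
    ZD (Cplx u) p = ZD (Cplx v) p ↔ XD u p = XD v p ∧ YD u p = YD v p := by
  rw [ZD_Cplx hu, ZD_Cplx hv, Complex.ext_iff]
  simp

/-- A function annihilated by `X` and `Y` on an open set has vanishing differential there,
since `[X, Y] = -4T`. -/
theorem fderiv_eq_zero_of_XD_YD {Ω : Set Heis} (hΩ : IsOpen Ω) {u : Heis → ℝ}
    (hu : ContDiffOn ℝ 2 u Ω) (hX : ∀ p ∈ Ω, XD u p = 0) (hY : ∀ p ∈ Ω, YD u p = 0)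
    {p : Heis} (hp : p ∈ Ω) : fderiv ℝ u p = 0 := by
  have hΩp : Ω ∈ nhds p := hΩ.mem_nhds hp
  have hup : ContDiffAt ℝ 2 u p := hu.contDiffAt hΩp
  have hsymm := (hup.isSymmSndFDerivAt (by simp)).eq (1, 0, 2 * p.2.1) (0, 1, -(2 * p.1))
  have hd : HasFDerivAt (fderiv ℝ u) (fderiv ℝ (fderiv ℝ u) p) p :=
    ((hup.fderiv_right (m := 1) (by norm_num)).differentiableAt (by norm_num)).hasFDerivAt
  let A : Heis →L[ℝ] Heis := (0 : Heis →L[ℝ] ℝ).prod ((0 : Heis →L[ℝ] ℝ).prod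
    ((2 : ℝ) • (ContinuousLinearMap.fst ℝ ℝ ℝ).comp (ContinuousLinearMap.snd ℝ ℝ (ℝ × ℝ))))
  let B : Heis →L[ℝ] Heis := (0 : Heis →L[ℝ] ℝ).prod ((0 : Heis →L[ℝ] ℝ).prod
    (-((2 : ℝ) • ContinuousLinearMap.fst ℝ ℝ (ℝ × ℝ))))
  have hA : HasFDerivAt (fun q : Heis => ((1, 0, 2 * q.2.1) : Heis)) A p :=
    (A.hasFDerivAt.const_add ((1, 0, 0) : Heis)).congr_of_eventuallyEq
      (.of_forall fun q => by simp [A])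
  have hB : HasFDerivAt (fun q : Heis => ((0, 1, -(2 * q.1)) : Heis)) B p :=
    (B.hasFDerivAt.const_add ((0, 1, 0) : Heis)).congr_of_eventuallyEq
      (.of_forall fun q => by simp [B])
  have hXX := (hd.clm_apply hA).unique ((hasFDerivAt_const (0 : ℝ) p).congr_of_eventuallyEq
    (Filter.eventuallyEq_of_mem hΩp hX))
  have hYY := (hd.clm_apply hB).unique ((hasFDerivAt_const (0 : ℝ) p).congr_of_eventuallyEq
    (Filter.eventuallyEq_of_mem hΩp hY))
  have eX := DFunLike.congr_fun hXX (0, 1, -(2 * p.1))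
  have eY := DFunLike.congr_fun hYY (1, 0, 2 * p.2.1)
  have smul_T : ∀ c : ℝ, fderiv ℝ u p (0, 0, c) = c * fderiv ℝ u p (0, 0, 1) := fun c => by
    rw [← smul_eq_mul, ← map_smul]
    simp
  simp only [A, B, add_apply, ContinuousLinearMap.comp_apply, ContinuousLinearMap.flip_apply,
    ContinuousLinearMap.prod_apply, zero_apply, smul_apply, neg_apply,
    ContinuousLinearMap.coe_fst', ContinuousLinearMap.coe_snd', smul_eq_mul, mul_one] at eX eY
  rw [smul_T] at eX eY
  have hT : fderiv ℝ u p (0, 0, 1) = 0 := by linarith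
  have hXp : fderiv ℝ u p (1, 0, 2 * p.2.1) = 0 := hX p hp
  have hYp : fderiv ℝ u p (0, 1, -(2 * p.1)) = 0 := hY p hp
  refine ContinuousLinearMap.ext fun ⟨a, b, c⟩ => ?_
  have hdecomp : ((a, b, c) : Heis) = a • ((1, 0, 2 * p.2.1) : Heis)
      + b • ((0, 1, -(2 * p.1)) : Heis)
      + (c - 2 * a * p.2.1 + 2 * b * p.1) • ((0, 0, 1) : Heis) := by
    ext <;> simp
    ring
  rw [hdecomp, map_add, map_add, map_smul, map_smul, map_smul, hXp, hYp, hT]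
  simp

/-- on a connected open set, smooth maps with positive horizontal Jacobians
and equal Preschwarzians have proportional Jacobians: J_F = c·J_G for some c > 0. -/
theorem stmt_12 (Ω : Set Heis) (hΩ : IsOpen Ω) (hconn : IsConnected Ω)
    (f1 f2 f3 g1 g2 g3 : Heis → ℝ)
    (hf1 : ContDiffOn ℝ (⊤ : ℕ∞) f1 Ω) (hf2 : ContDiffOn ℝ (⊤ : ℕ∞) f2 Ω)
    (hf3 : ContDiffOn ℝ (⊤ : ℕ∞) f3 Ω)
    (hg1 : ContDiffOn ℝ (⊤ : ℕ∞) g1 Ω) (hg2 : ContDiffOn ℝ (⊤ : ℕ∞) g2 Ω)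
    (hg3 : ContDiffOn ℝ (⊤ : ℕ∞) g3 Ω)
    (hJf : ∀ p ∈ Ω, 0 < JF f1 f2 p) (hJg : ∀ p ∈ Ω, 0 < JF g1 g2 p)
    (hP : ∀ p ∈ Ω, PS f1 f2 p = PS g1 g2 p) :
    ∃ c : ℝ, 0 < c ∧ ∀ p ∈ Ω, JF f1 f2 p = c * JF g1 g2 p := by
  have hlf : ContDiffOn ℝ 2 (fun q => Real.log (JF f1 f2 q)) Ω :=
    (JF_contDiffOn hΩ hf1 hf2).log fun p hp => (hJf p hp).ne'
  have hlg : ContDiffOn ℝ 2 (fun q => Real.log (JF g1 g2 q)) Ω :=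
    (JF_contDiffOn hΩ hg1 hg2).log fun p hp => (hJg p hp).ne'
  have hdf := hlf.differentiableOn two_ne_zero
  have hdg := hlg.differentiableOn two_ne_zero
  have hXY : ∀ p ∈ Ω,
      XD (fun q => Real.log (JF f1 f2 q) - Real.log (JF g1 g2 q)) p = 0 ∧
      YD (fun q => Real.log (JF f1 f2 q) - Real.log (JF g1 g2 q)) p = 0 := by
    intro p hp
    have hfp := hdf.differentiableAt (hΩ.mem_nhds hp)
    have hgp := hdg.differentiableAt (hΩ.mem_nhds hp)
    have h := (ZD_Cplx_eq_iff hfp hgp).1 (hP p hp)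
    simp only [XD, YD, fderiv_fun_sub hfp hgp, sub_apply, sub_eq_zero]
    exact h
  obtain ⟨a, ha⟩ := hΩ.exists_is_const_of_fderiv_eq_zero hconn.isPreconnected (hdf.sub hdg)
    fun p hp => fderiv_eq_zero_of_XD_YD hΩ (hlf.sub hlg) (fun q hq => (hXY q hq).1)
      (fun q hq => (hXY q hq).2) hp
  refine ⟨Real.exp a, Real.exp_pos a, fun p hp => ?_⟩
  rw [← ha p hp, Pi.sub_apply, Real.exp_sub, Real.exp_log (hJf p hp), Real.exp_log (hJg p hp),
    div_mul_cancel₀ _ (hJg p hp).ne']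
end
end

section
/- Let Ω ⊆ ℝ³ be open and let f = (f₁,f₂,f₃) : Ω → ℝ³ be a C² map satisfying the contact equations on Ω. If Δ_H f₁ = 0 and Δ_H f₂ = 0 on Ω, then also Δ_H f₃ = 0 on Ω. -/
noncomputable section

open Complex

theorem ContDiffOn.differentiableAt_fderiv_apply {E F : Type*} [NormedAddCommGroup E]
    [NormedSpace ℝ E] [NormedAddCommGroup F] [NormedSpace ℝ F] {s : Set E} {u : E → F}
    {V : E → E} {p : E} (hu : ContDiffOn ℝ 2 u s) (hs : IsOpen s) (hp : p ∈ s)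
    (hV : DifferentiableAt ℝ V p) : DifferentiableAt ℝ (fun q => fderiv ℝ u q (V q)) p :=
  (((hu.contDiffAt (hs.mem_nhds hp)).fderiv_right (m := 1) (by norm_num)).differentiableAt
    one_ne_zero).clm_apply hV

/-- If `h = 2 (b a₁ - a b₁)` near `p`, where `a₁` and `b₁` are the derivatives of `a` and `b` in
the direction `v` at `p`, then the first-order terms in the `v`-derivative of `h` cancel. -/
theorem fderiv_apply_of_contact {E : Type*} [NormedAddCommGroup E] [NormedSpace ℝ E]
    {a b a₁ b₁ h : E → ℝ} {p v : E}
    (ha : DifferentiableAt ℝ a p) (hb : DifferentiableAt ℝ b p)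
    (ha₁ : DifferentiableAt ℝ a₁ p) (hb₁ : DifferentiableAt ℝ b₁ p)
    (hav : a₁ p = fderiv ℝ a p v) (hbv : b₁ p = fderiv ℝ b p v)
    (hh : ∀ᶠ q in nhds p, h q - 2 * b q * a₁ q + 2 * a q * b₁ q = 0) :
    fderiv ℝ h p v = 2 * b p * fderiv ℝ a₁ p v - 2 * a p * fderiv ℝ b₁ p v := by
  have heq : h =ᶠ[nhds p] fun q => 2 * (b q * a₁ q - a q * b₁ q) := by
    filter_upwards [hh] with q hq
    linarith
  have hd := (((hb.hasFDerivAt.mul ha₁.hasFDerivAt).sub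
    (ha.hasFDerivAt.mul hb₁.hasFDerivAt)).const_mul 2).congr_of_eventuallyEq heq
  rw [hd.fderiv]
  simp only [smul_apply, sub_apply, add_apply, smul_eq_mul, hav, hbv]
  ring

/-- a C² map satisfying the contact equations whose first two components
are harmonic for the sub-Laplacian also has harmonic third component. -/
theorem stmt_14 (Ω : Set Heis) (hΩ : IsOpen Ω) (f1 f2 f3 : Heis → ℝ)
    (hf1 : ContDiffOn ℝ 2 f1 Ω) (hf2 : ContDiffOn ℝ 2 f2 Ω) (hf3 : ContDiffOn ℝ 2 f3 Ω)
    (hcont : ContactOn f1 f2 f3 Ω)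
    (h1 : ∀ p ∈ Ω, LapH f1 p = 0) (h2 : ∀ p ∈ Ω, LapH f2 p = 0) :
    ∀ p ∈ Ω, LapH f3 p = 0 := by
  intro p hp
  have hΩp := hΩ.mem_nhds hp
  have hd1 := (hf1.contDiffAt hΩp).differentiableAt two_ne_zero
  have hd2 := (hf2.contDiffAt hΩp).differentiableAt two_ne_zero
  have hVX : DifferentiableAt ℝ (fun q : Heis => ((1, 0, 2 * q.2.1) : Heis)) p := by fun_prop
  have hVY : DifferentiableAt ℝ (fun q : Heis => ((0, 1, -(2 * q.1)) : Heis)) p := by fun_prop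
  have hX : XD (XD f3) p = 2 * f2 p * XD (XD f1) p - 2 * f1 p * XD (XD f2) p :=
    fderiv_apply_of_contact hd1 hd2 (hf1.differentiableAt_fderiv_apply hΩ hp hVX)
      (hf2.differentiableAt_fderiv_apply hΩ hp hVX) rfl rfl
      (Filter.eventually_of_mem hΩp fun q hq => (hcont q hq).1)
  have hY : YD (YD f3) p = 2 * f2 p * YD (YD f1) p - 2 * f1 p * YD (YD f2) p :=
    fderiv_apply_of_contact hd1 hd2 (hf1.differentiableAt_fderiv_apply hΩ hp hVY)
      (hf2.differentiableAt_fderiv_apply hΩ hp hVY) rfl rfl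
      (Filter.eventually_of_mem hΩp fun q hq => (hcont q hq).2)
  have hL1 : XD (XD f1) p + YD (YD f1) p = 0 := h1 p hp
  have hL2 : XD (XD f2) p + YD (YD f2) p = 0 := h2 p hp
  change XD (XD f3) p + YD (YD f3) p = 0
  linear_combination hX + hY + 2 * f2 p * hL1 - 2 * f1 p * hL2
end
end

section
/- Let Ω ⊆ ℝ³ be open and let u : Ω → ℝ be a smooth function with Δ_H u = 0 on Ω, and let f = (f₁,f₂,f₃) = (Xu, Yu, Tu) be the associated gradient harmonic map. Then f satisfies Δ_H f₁ = 8·T f₂, Δ_H f₂ = −8·T f₁, and Δ_H f₃ = 0 on Ω. Consequently the system decouples into the bi-Laplace equations Δ_H(Δ_H f₁) = −64·T²f₁, Δ_H(Δ_H f₂) = −64·T²f₂, and Δ_H f₃ = 0 on Ω. -/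
noncomputable section

open Complex

section Derivations

variable {E : Type*} [NormedAddCommGroup E] [NormedSpace ℝ E] {Ω : Set Heis} {u v : Heis → E}

lemma fderiv_fderiv_apply {F : Type*} [NormedAddCommGroup F] [NormedSpace ℝ F] {u : F → E}
    {W : F → F} {W' : F →L[ℝ] F} {p : F} (hu : ContDiffAt ℝ 2 u p) (hW : HasFDerivAt W W' p)
    (w : F) :
    fderiv ℝ (fun q => fderiv ℝ u q (W q)) p w
      = fderiv ℝ (fderiv ℝ u) p w (W p) + fderiv ℝ u p (W' w) := by
  have h : DifferentiableAt ℝ (fderiv ℝ u) p :=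
    (hu.fderiv_right (m := 1) (by norm_num)).differentiableAt (by norm_num)
  rw [(h.hasFDerivAt.clm_apply hW).fderiv]
  simp [add_comm]

lemma hasFDerivAt_frameX (p : Heis) :
    HasFDerivAt (fun q : Heis => ((1, 0, 2 * q.2.1) : Heis))
      ((0 : Heis →L[ℝ] ℝ).prod ((0 : Heis →L[ℝ] ℝ).prod
        ((2 : ℝ) • (ContinuousLinearMap.fst ℝ ℝ ℝ).comp
          (ContinuousLinearMap.snd ℝ ℝ (ℝ × ℝ))))) p :=
  (hasFDerivAt_const 1 p).prodMk ((hasFDerivAt_const 0 p).prodMk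
    ((hasFDerivAt_snd.fst).const_mul 2))

lemma hasFDerivAt_frameY (p : Heis) :
    HasFDerivAt (fun q : Heis => ((0, 1, -(2 * q.1)) : Heis))
      ((0 : Heis →L[ℝ] ℝ).prod ((0 : Heis →L[ℝ] ℝ).prod
        (-((2 : ℝ) • ContinuousLinearMap.fst ℝ ℝ (ℝ × ℝ))))) p :=
  (hasFDerivAt_const 0 p).prodMk ((hasFDerivAt_const 1 p).prodMk
    ((hasFDerivAt_fst.const_mul 2).neg))

lemma hasFDerivAt_frameT (p : Heis) :
    HasFDerivAt (fun _ : Heis => ((0, 0, 1) : Heis)) (0 : Heis →L[ℝ] Heis) p :=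
  hasFDerivAt_const _ p

lemma contDiffOn_fderiv_apply (hΩ : IsOpen Ω) (hu : ContDiffOn ℝ (⊤ : ℕ∞) u Ω) {W : Heis → Heis}
    (hW : ContDiff ℝ (⊤ : ℕ∞) W) : ContDiffOn ℝ (⊤ : ℕ∞) (fun q => fderiv ℝ u q (W q)) Ω :=
  (hu.fderiv_of_isOpen hΩ (by simp)).clm_apply hW.contDiffOn

lemma contDiffOn_XD (hΩ : IsOpen Ω) (hu : ContDiffOn ℝ (⊤ : ℕ∞) u Ω) :
    ContDiffOn ℝ (⊤ : ℕ∞) (XD u) Ω :=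
  contDiffOn_fderiv_apply hΩ hu (by fun_prop)

lemma contDiffOn_YD (hΩ : IsOpen Ω) (hu : ContDiffOn ℝ (⊤ : ℕ∞) u Ω) :
    ContDiffOn ℝ (⊤ : ℕ∞) (YD u) Ω :=
  contDiffOn_fderiv_apply hΩ hu (by fun_prop)

lemma contDiffOn_TD (hΩ : IsOpen Ω) (hu : ContDiffOn ℝ (⊤ : ℕ∞) u Ω) :
    ContDiffOn ℝ (⊤ : ℕ∞) (TD u) Ω :=
  contDiffOn_fderiv_apply hΩ hu (by fun_prop)

lemma fderiv_eqOn (hΩ : IsOpen Ω) (h : Set.EqOn u v Ω) :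
    Set.EqOn (fderiv ℝ u) (fderiv ℝ v) Ω := fun _ hp =>
  (h.eventuallyEq_of_mem (hΩ.mem_nhds hp)).fderiv_eq

lemma XD_eqOn (hΩ : IsOpen Ω) (h : Set.EqOn u v Ω) : Set.EqOn (XD u) (XD v) Ω := fun p hp => by
  rw [XD, XD, fderiv_eqOn hΩ h hp]

lemma YD_eqOn (hΩ : IsOpen Ω) (h : Set.EqOn u v Ω) : Set.EqOn (YD u) (YD v) Ω := fun p hp => by
  rw [YD, YD, fderiv_eqOn hΩ h hp]

lemma TD_eqOn (hΩ : IsOpen Ω) (h : Set.EqOn u v Ω) : Set.EqOn (TD u) (TD v) Ω := fun p hp => by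
  rw [TD, TD, fderiv_eqOn hΩ h hp]

lemma LapH_eqOn (hΩ : IsOpen Ω) (h : Set.EqOn u v Ω) : Set.EqOn (LapH u) (LapH v) Ω :=
  fun p hp => by
    rw [LapH, LapH, XD_eqOn hΩ (XD_eqOn hΩ h) hp, YD_eqOn hΩ (YD_eqOn hΩ h) hp]

lemma XD_const_smul (c : ℝ) : XD (c • u) = c • XD u := by
  ext p
  simp [XD, fderiv_const_smul_field]

lemma YD_const_smul (c : ℝ) : YD (c • u) = c • YD u := by
  ext p
  simp [YD, fderiv_const_smul_field]

lemma TD_const_smul (c : ℝ) : TD (c • u) = c • TD u := by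
  ext p
  simp [TD, fderiv_const_smul_field]

lemma LapH_const_smul (c : ℝ) : LapH (c • u) = c • LapH u := by
  ext p
  simp [LapH, XD_const_smul, YD_const_smul]

lemma differentiableAt_of_contDiffOn (hΩ : IsOpen Ω) (hu : ContDiffOn ℝ (⊤ : ℕ∞) u Ω) {p : Heis}
    (hp : p ∈ Ω) : DifferentiableAt ℝ u p :=
  (hu.contDiffAt (hΩ.mem_nhds hp)).differentiableAt (by simp)

lemma XD_add_eqOn (hΩ : IsOpen Ω) (hu : ContDiffOn ℝ (⊤ : ℕ∞) u Ω)
    (hv : ContDiffOn ℝ (⊤ : ℕ∞) v Ω) : Set.EqOn (XD (u + v)) (XD u + XD v) Ω := fun p hp => by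
  simp [XD, fderiv_add (differentiableAt_of_contDiffOn hΩ hu hp)
    (differentiableAt_of_contDiffOn hΩ hv hp)]

lemma YD_add_eqOn (hΩ : IsOpen Ω) (hu : ContDiffOn ℝ (⊤ : ℕ∞) u Ω)
    (hv : ContDiffOn ℝ (⊤ : ℕ∞) v Ω) : Set.EqOn (YD (u + v)) (YD u + YD v) Ω := fun p hp => by
  simp [YD, fderiv_add (differentiableAt_of_contDiffOn hΩ hu hp)
    (differentiableAt_of_contDiffOn hΩ hv hp)]

lemma TD_add_eqOn (hΩ : IsOpen Ω) (hu : ContDiffOn ℝ (⊤ : ℕ∞) u Ω)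
    (hv : ContDiffOn ℝ (⊤ : ℕ∞) v Ω) : Set.EqOn (TD (u + v)) (TD u + TD v) Ω := fun p hp => by
  simp [TD, fderiv_add (differentiableAt_of_contDiffOn hΩ hu hp)
    (differentiableAt_of_contDiffOn hΩ hv hp)]

lemma contDiffAt_two_of_contDiffOn (hΩ : IsOpen Ω) (hu : ContDiffOn ℝ (⊤ : ℕ∞) u Ω) {p : Heis}
    (hp : p ∈ Ω) : ContDiffAt ℝ 2 u p :=
  (hu.contDiffAt (hΩ.mem_nhds hp)).of_le (WithTop.coe_le_coe.2 le_top)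

lemma isSymmSndFDerivAt_of_contDiffOn (hΩ : IsOpen Ω) (hu : ContDiffOn ℝ (⊤ : ℕ∞) u Ω) {p : Heis}
    (hp : p ∈ Ω) : IsSymmSndFDerivAt ℝ u p :=
  (contDiffAt_two_of_contDiffOn hΩ hu hp).isSymmSndFDerivAt (by simp)

/-- The commutation relation `[X, Y] = -4T`. -/
lemma YD_XD_eqOn (hΩ : IsOpen Ω) (hu : ContDiffOn ℝ (⊤ : ℕ∞) u Ω) :
    Set.EqOn (YD (XD u)) (XD (YD u) + (4 : ℝ) • TD u) Ω := fun p hp => by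
  have h2 := contDiffAt_two_of_contDiffOn hΩ hu hp
  have hYX := fderiv_fderiv_apply h2 (hasFDerivAt_frameX p) (0, 1, -(2 * p.1))
  have hXY := fderiv_fderiv_apply h2 (hasFDerivAt_frameY p) (1, 0, 2 * p.2.1)
  have hsymm := isSymmSndFDerivAt_of_contDiffOn hΩ hu hp (0, 1, -(2 * p.1)) (1, 0, 2 * p.2.1)
  have hT : ∀ c : ℝ, fderiv ℝ u p (0, 0, c) = c • fderiv ℝ u p (0, 0, 1) := fun c => by
    rw [← map_smul]
    simp
  change fderiv ℝ (fun q => fderiv ℝ u q (1, 0, 2 * q.2.1)) p (0, 1, -(2 * p.1))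
    = fderiv ℝ (fun q => fderiv ℝ u q (0, 1, -(2 * q.1))) p (1, 0, 2 * p.2.1)
      + (4 : ℝ) • fderiv ℝ u p (0, 0, 1)
  rw [hYX, hXY, hsymm]
  simp only [ContinuousLinearMap.prod_apply, zero_apply,
    neg_apply, smul_apply, ContinuousLinearMap.comp_apply,
    ContinuousLinearMap.coe_fst', ContinuousLinearMap.coe_snd', smul_eq_mul, mul_one]
  rw [hT 2, hT (-2)]
  module

lemma XD_TD_eqOn (hΩ : IsOpen Ω) (hu : ContDiffOn ℝ (⊤ : ℕ∞) u Ω) :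
    Set.EqOn (XD (TD u)) (TD (XD u)) Ω := fun p hp => by
  have h2 := contDiffAt_two_of_contDiffOn hΩ hu hp
  have hXT := fderiv_fderiv_apply h2 (hasFDerivAt_frameT p) (1, 0, 2 * p.2.1)
  have hTX := fderiv_fderiv_apply h2 (hasFDerivAt_frameX p) (0, 0, 1)
  have hsymm := isSymmSndFDerivAt_of_contDiffOn hΩ hu hp (0, 0, 1) (1, 0, 2 * p.2.1)
  change fderiv ℝ (fun q => fderiv ℝ u q (0, 0, 1)) p (1, 0, 2 * p.2.1)
    = fderiv ℝ (fun q => fderiv ℝ u q (1, 0, 2 * q.2.1)) p (0, 0, 1)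
  rw [hXT, hTX, hsymm]
  simp [← Prod.zero_eq_mk]

lemma YD_TD_eqOn (hΩ : IsOpen Ω) (hu : ContDiffOn ℝ (⊤ : ℕ∞) u Ω) :
    Set.EqOn (YD (TD u)) (TD (YD u)) Ω := fun p hp => by
  have h2 := contDiffAt_two_of_contDiffOn hΩ hu hp
  have hYT := fderiv_fderiv_apply h2 (hasFDerivAt_frameT p) (0, 1, -(2 * p.1))
  have hTY := fderiv_fderiv_apply h2 (hasFDerivAt_frameY p) (0, 0, 1)
  have hsymm := isSymmSndFDerivAt_of_contDiffOn hΩ hu hp (0, 0, 1) (0, 1, -(2 * p.1))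
  change fderiv ℝ (fun q => fderiv ℝ u q (0, 0, 1)) p (0, 1, -(2 * p.1))
    = fderiv ℝ (fun q => fderiv ℝ u q (0, 1, -(2 * q.1))) p (0, 0, 1)
  rw [hYT, hTY, hsymm]
  simp [← Prod.zero_eq_mk]

/-- `[Δ_H, T] = 0`. -/
lemma LapH_TD_eqOn (hΩ : IsOpen Ω) (hu : ContDiffOn ℝ (⊤ : ℕ∞) u Ω) :
    Set.EqOn (LapH (TD u)) (TD (LapH u)) Ω := fun p hp => by
  have hX := contDiffOn_XD hΩ hu
  have hY := contDiffOn_YD hΩ hu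
  have hadd := TD_add_eqOn hΩ (contDiffOn_XD hΩ hX) (contDiffOn_YD hΩ hY) hp
  change _ = TD (XD (XD u) + YD (YD u)) p
  rw [hadd, LapH, XD_eqOn hΩ (XD_TD_eqOn hΩ hu) hp, YD_eqOn hΩ (YD_TD_eqOn hΩ hu) hp,
    XD_TD_eqOn hΩ hX hp, YD_TD_eqOn hΩ hY hp, Pi.add_apply]

/-- `[Δ_H, X] = 8TY`. -/
lemma LapH_XD_eqOn (hΩ : IsOpen Ω) (hu : ContDiffOn ℝ (⊤ : ℕ∞) u Ω) :
    Set.EqOn (LapH (XD u)) (XD (LapH u) + (8 : ℝ) • TD (YD u)) Ω := fun p hp => by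
  have hX := contDiffOn_XD hΩ hu
  have hY := contDiffOn_YD hΩ hu
  have hT : ContDiffOn ℝ (⊤ : ℕ∞) ((4 : ℝ) • TD u) Ω := (contDiffOn_TD hΩ hu).const_smul 4
  have hadd := XD_add_eqOn hΩ (contDiffOn_XD hΩ hX) (contDiffOn_YD hΩ hY) hp
  have hYYX : YD (YD (XD u)) p = XD (YD (YD u)) p + (8 : ℝ) • TD (YD u) p := by
    rw [YD_eqOn hΩ (YD_XD_eqOn hΩ hu) hp,
      YD_add_eqOn hΩ (contDiffOn_XD hΩ hY) hT hp, Pi.add_apply,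
      YD_const_smul, YD_XD_eqOn hΩ hY hp, Pi.add_apply, Pi.smul_apply, Pi.smul_apply,
      YD_TD_eqOn hΩ hu hp]
    module
  change _ = XD (XD (XD u) + YD (YD u)) p + (8 : ℝ) • TD (YD u) p
  rw [hadd, LapH, hYYX, Pi.add_apply, add_assoc]

/-- `[Δ_H, Y] = -8TX`. -/
lemma LapH_YD_eqOn (hΩ : IsOpen Ω) (hu : ContDiffOn ℝ (⊤ : ℕ∞) u Ω) :
    Set.EqOn (LapH (YD u)) (YD (LapH u) + (-8 : ℝ) • TD (XD u)) Ω := fun p hp => by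
  have hX := contDiffOn_XD hΩ hu
  have hY := contDiffOn_YD hΩ hu
  have hT : ContDiffOn ℝ (⊤ : ℕ∞) ((4 : ℝ) • TD u) Ω := (contDiffOn_TD hΩ hu).const_smul 4
  have hadd := YD_add_eqOn hΩ (contDiffOn_XD hΩ hX) (contDiffOn_YD hΩ hY) hp
  have hYXX : YD (XD (XD u)) p = XD (XD (YD u)) p + (8 : ℝ) • TD (XD u) p := by
    rw [YD_XD_eqOn hΩ hX hp, Pi.add_apply, XD_eqOn hΩ (YD_XD_eqOn hΩ hu) hp,
      XD_add_eqOn hΩ (contDiffOn_XD hΩ hY) hT hp, Pi.add_apply,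
      XD_const_smul, Pi.smul_apply, Pi.smul_apply, XD_TD_eqOn hΩ hu hp]
    module
  change _ = YD (XD (XD u) + YD (YD u)) p + (-8 : ℝ) • TD (XD u) p
  rw [hadd, LapH, Pi.add_apply, hYXX]
  module

end Derivations

/-- the gradient harmonic map f = (Xu, Yu, Tu) of a sub-Laplacian harmonic
function u satisfies Δ_H f₁ = 8Tf₂, Δ_H f₂ = −8Tf₁, Δ_H f₃ = 0, and consequently the
bi-Laplace system Δ_H(Δ_H f₁) = −64T²f₁, Δ_H(Δ_H f₂) = −64T²f₂, Δ_H f₃ = 0. -/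
theorem stmt_15 (Ω : Set Heis) (hΩ : IsOpen Ω) (u : Heis → ℝ)
    (hu : ContDiffOn ℝ (⊤ : ℕ∞) u Ω) (hharm : ∀ p ∈ Ω, LapH u p = 0) :
    (∀ p ∈ Ω,
      LapH (XD u) p = 8 * TD (YD u) p ∧
      LapH (YD u) p = -(8 * TD (XD u) p) ∧
      LapH (TD u) p = 0) ∧
    (∀ p ∈ Ω,
      LapH (LapH (XD u)) p = -(64 * TD (TD (XD u)) p) ∧
      LapH (LapH (YD u)) p = -(64 * TD (TD (YD u)) p) ∧
      LapH (TD u) p = 0) := by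
  have hX := contDiffOn_XD hΩ hu
  have hY := contDiffOn_YD hΩ hu
  have hzero : Set.EqOn (LapH u) 0 Ω := hharm
  have h1 : Set.EqOn (LapH (XD u)) ((8 : ℝ) • TD (YD u)) Ω := fun p hp => by
    rw [LapH_XD_eqOn hΩ hu hp, Pi.add_apply, XD_eqOn hΩ hzero hp]
    simp [XD]
  have h2 : Set.EqOn (LapH (YD u)) ((-8 : ℝ) • TD (XD u)) Ω := fun p hp => by
    rw [LapH_YD_eqOn hΩ hu hp, Pi.add_apply, YD_eqOn hΩ hzero hp]
    simp [YD]
  have h3 : ∀ p ∈ Ω, LapH (TD u) p = 0 := fun p hp => by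
    rw [LapH_TD_eqOn hΩ hu hp, TD_eqOn hΩ hzero hp]
    simp [TD]
  refine ⟨fun p hp => ⟨?_, ?_, h3 p hp⟩, fun p hp => ⟨?_, ?_, h3 p hp⟩⟩
  · simpa using h1 hp
  · simpa using h2 hp
  · rw [LapH_eqOn hΩ h1 hp, LapH_const_smul, Pi.smul_apply, LapH_TD_eqOn hΩ hY hp,
      TD_eqOn hΩ h2 hp, TD_const_smul, Pi.smul_apply, smul_eq_mul, smul_eq_mul]
    ring
  · rw [LapH_eqOn hΩ h2 hp, LapH_const_smul, Pi.smul_apply, LapH_TD_eqOn hΩ hX hp,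
      TD_eqOn hΩ h1 hp, TD_const_smul, Pi.smul_apply, smul_eq_mul, smul_eq_mul]
    ring
end
end
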